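/- Let -∞ < a < b < ∞, 1 ≤ p < ∞, let μ be a weight on [a,b], let Φ be a Young function such that Λ(t) := Φ(t^{1/p}) is convex, and let h and g be nonnegative measurable functions on [a,b]. Then ‖ x ↦ (∫_a^x g(t) dt)^{1/p} · h(x) ‖_{L_μ^Φ[a,b]}^p ≤ 2 · ∫_a^b g(t) · ‖h‖_{L_μ^Φ[t,b]}^p dt. -/

import Mathlib

open MeasureTheory Set Filter
open scoped ENNReal NNReal

noncomputable section

/-- A Young function: even, convex, vanishing at `0`, nonnegative, tending to `∞`. -/
def IsYoung (Φ : ℝ → ℝ) : Prop :=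
  ConvexOn ℝ Set.univ Φ ∧ (∀ t, Φ (-t) = Φ t) ∧ Φ 0 = 0 ∧ (∀ t, 0 ≤ Φ t) ∧
    Filter.Tendsto Φ Filter.atTop Filter.atTop

/-- A weight on `[a,b]`: nonnegative, measurable, positive a.e. on `[a,b]`. -/
def IsWeight (w : ℝ → ℝ) (a b : ℝ) : Prop :=
  Measurable w ∧ (∀ x, 0 ≤ w x) ∧
    ∀ᵐ x ∂(MeasureTheory.volume.restrict (Set.Icc a b)), 0 < w x

/-- `Φ` is submultiplicative on `[0,∞)`. -/
def Submult (Φ : ℝ → ℝ) : Prop :=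
  ∀ s t : ℝ, 0 ≤ s → 0 ≤ t → Φ (s * t) ≤ Φ s * Φ t

/-- `Φinv` is the inverse of `Φ` restricted to `[0,∞)`. -/
def IsYoungInv (Φ Φinv : ℝ → ℝ) : Prop :=
  (∀ t, 0 ≤ t → 0 ≤ Φinv t) ∧ (∀ t, 0 ≤ t → Φ (Φinv t) = t) ∧
    (∀ t, 0 ≤ t → Φinv (Φ t) = t)

/-- `μ[x,y] := ∫ₓ^y μ(t) dt`, as an extended nonnegative real. -/
def wInt (μ : ℝ → ℝ) (x y : ℝ) : ℝ≥0∞ :=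
  ∫⁻ t in Set.Icc x y, ENNReal.ofReal (μ t)

/-- The Luxemburg (gauge) norm of `f` on `[a,b]` w.r.t. the Young function `Φ`
and the weight `μ`: `inf {k > 0 : ∫ₐ^b Φ(f/k) μ ≤ 1}` (`∞` if no such `k`). -/
def luxNorm (Φ μ : ℝ → ℝ) (a b : ℝ) (f : ℝ → ℝ) : ℝ≥0∞ :=
  sInf {k : ℝ≥0∞ | ∃ c : ℝ, 0 < c ∧ k = ENNReal.ofReal c ∧
    (∫⁻ x in Set.Icc a b, ENNReal.ofReal (Φ (f x / c) * μ x)) ≤ 1}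

/-- `f` is Lipschitz on `[a,b]` and `f'` is a.e. its derivative on `(a,b)`. -/
def LipschitzWithDeriv (f f' : ℝ → ℝ) (a b : ℝ) : Prop :=
  (∃ K, LipschitzOnWith K f (Set.Icc a b)) ∧
    ∀ᵐ x ∂(MeasureTheory.volume.restrict (Set.Ioo a b)), HasDerivAt f (f' x) x

/-- The weighted `L^p` norm `(∫ₐ^b |g|^p w)^{1/p}`, as an extended nonnegative real. -/
def lpNorm (w : ℝ → ℝ) (p a b : ℝ) (g : ℝ → ℝ) : ℝ≥0∞ :=
  (∫⁻ t in Set.Icc a b, ENNReal.ofReal (|g t| ^ p * w t)) ^ (1 / p)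

/-- The Luxemburg (gauge) norm on a general measure space. -/
def luxNormGen {Ω : Type*} [MeasurableSpace Ω] (Φ : ℝ → ℝ) (μ : Measure Ω)
    (f : Ω → ℝ) : ℝ≥0∞ :=
  sInf {k : ℝ≥0∞ | ∃ c : ℝ, 0 < c ∧ k = ENNReal.ofReal c ∧
    (∫⁻ x, ENNReal.ofReal (Φ (f x / c)) ∂μ) ≤ 1}

/-- The Luxemburg (gauge) norm for an extended-real-valued Young function. -/
def luxNormE {Ω : Type*} [MeasurableSpace Ω] (Ψ : ℝ → ℝ≥0∞) (μ : Measure Ω)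
    (f : Ω → ℝ) : ℝ≥0∞ :=
  sInf {k : ℝ≥0∞ | ∃ c : ℝ, 0 < c ∧ k = ENNReal.ofReal c ∧
    (∫⁻ x, Ψ (f x / c) ∂μ) ≤ 1}

lemma young_scale {Φ : ℝ → ℝ} (hΦ : IsYoung Φ) {l : ℝ} (h0 : 0 ≤ l) (h1 : l ≤ 1) (t : ℝ) :
    Φ (l * t) ≤ l * Φ t := by
  have := hΦ.1.2 (mem_univ t) (mem_univ 0) h0 (sub_nonneg.2 h1) (by ring)
  simpa [hΦ.2.2.1] using this

lemma young_mono {Φ : ℝ → ℝ} (hΦ : IsYoung Φ) {s t : ℝ} (h0 : 0 ≤ s) (h1 : s ≤ t) :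
    Φ s ≤ Φ t := by
  rcases h0.eq_or_lt with rfl | hs
  · rw [hΦ.2.2.1]; exact hΦ.2.2.2.1 t
  have ht : 0 < t := hs.trans_le h1
  have := young_scale hΦ (l := s / t) (by positivity) ((div_le_one ht).2 h1) t
  rw [div_mul_cancel₀ _ ht.ne'] at this
  refine this.trans (mul_le_of_le_one_left (hΦ.2.2.2.1 t) ((div_le_one ht).2 h1))

lemma convex_cont {Φ : ℝ → ℝ} (hΦ : ConvexOn ℝ univ Φ) : Continuous Φ := by
  have := hΦ.continuousOn_interior
  simpa using this

lemma lux_modular {Φ μ h : ℝ → ℝ} (hΦ : IsYoung Φ) (hμ0 : ∀ x, 0 ≤ μ x) (hh0 : ∀ x, 0 ≤ h x)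
    {t b c : ℝ} (hc : luxNorm Φ μ t b h < ENNReal.ofReal c) :
    (∫⁻ x in Set.Icc t b, ENNReal.ofReal (Φ (h x / c) * μ x)) ≤ 1 := by
  obtain ⟨k, ⟨d, hd, rfl, hI⟩, hk⟩ := sInf_lt_iff.1 hc
  have hdc : d < c := (ENNReal.ofReal_lt_ofReal_iff_of_nonneg hd.le).1 hk
  refine le_trans (lintegral_mono fun x => ?_) hI
  apply ENNReal.ofReal_le_ofReal
  apply mul_le_mul_of_nonneg_right _ (hμ0 x)
  have hc0 : 0 < c := hd.trans hdc
  apply young_mono hΦ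
  · exact div_nonneg (hh0 x) hc0.le
  · exact div_le_div_of_nonneg_left (hh0 x) hd hdc.le

lemma lux_antitone (Φ μ h : ℝ → ℝ) (b : ℝ) : Antitone (fun t => luxNorm Φ μ t b h) := by
  intro s t hst
  apply sInf_le_sInf
  rintro k ⟨d, hd, rfl, hI⟩
  exact ⟨d, hd, rfl, (lintegral_mono_set (Icc_subset_Icc_left hst)).trans hI⟩

lemma lux_zero {Φ μ h : ℝ → ℝ} (hΦ : IsYoung Φ) (hμm : Measurable μ) (hμ0 : ∀ x, 0 ≤ μ x)
    (hh : Measurable h) (hh0 : ∀ x, 0 ≤ h x)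
    {t b : ℝ} (hμ : ∀ᵐ x ∂(volume.restrict (Set.Icc t b)), 0 < μ x)
    (h0 : luxNorm Φ μ t b h = 0) :
    ∀ᵐ x ∂(volume.restrict (Set.Icc t b)), h x = 0 := by
  have hΦm : Measurable Φ := (convex_cont hΦ.1).measurable
  have key : ∀ L : ℕ, ∫⁻ x in Set.Icc t b, ENNReal.ofReal (Φ (h x * L) * μ x) = 0 := by
    intro L
    by_contra hne
    have hle : ∀ n : ℕ, 1 ≤ n → 1 ≤ L →
        (n : ℝ≥0∞) * ∫⁻ x in Set.Icc t b, ENNReal.ofReal (Φ (h x * L) * μ x) ≤ 1 := by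
      intro n hn hL
      have hn' : (1 : ℝ) ≤ n := by exact_mod_cast hn
      have hL' : (1 : ℝ) ≤ L := by exact_mod_cast hL
      have hc : (0:ℝ) < 1 / (n * L) := by positivity
      have := lux_modular hΦ hμ0 hh0 (t := t) (b := b) (c := 1 / (n * L))
        (by rw [h0]; exact ENNReal.ofReal_pos.2 hc)
      rw [← lintegral_const_mul _ (by fun_prop)]
      refine le_trans (lintegral_mono fun x => ?_) this
      rw [← ENNReal.ofReal_natCast, ← ENNReal.ofReal_mul (by positivity)]
      apply ENNReal.ofReal_le_ofReal
      have h2 := young_scale hΦ (l := 1 / n) (by positivity)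
        ((div_le_one (by positivity)).2 hn') (h x / (1 / (n * L)))
      have e : 1 / (n:ℝ) * (h x / (1 / (n * L))) = h x * L := by field_simp
      rw [e] at h2
      rw [← mul_assoc]
      apply mul_le_mul_of_nonneg_right _ (hμ0 x)
      calc (n:ℝ) * Φ (h x * L) ≤ n * (1 / n * Φ (h x / (1 / (n * L)))) := by gcongr
        _ = _ := by field_simp
    rcases Nat.eq_zero_or_pos L with rfl | hL
    · simp [hΦ.2.2.1] at hne
    · obtain ⟨n, hn⟩ := ENNReal.exists_nat_mul_gt (a := ∫⁻ x in Set.Icc t b, ENNReal.ofReal (Φ (h x * L) * μ x)) (b := 1) hne (by simp)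
      rcases Nat.eq_zero_or_pos n with rfl | hn0
      · simp at hn
      · exact absurd (hle n hn0 hL) (not_le.2 hn)
  have key2 : ∀ᵐ x ∂(volume.restrict (Set.Icc t b)), ∀ L : ℕ, ENNReal.ofReal (Φ (h x * L) * μ x) = 0 := by
    rw [ae_all_iff]
    intro L
    exact (lintegral_eq_zero_iff (by fun_prop)).1 (key L)
  filter_upwards [key2, hμ] with x hx hxμ
  by_contra hne
  have hpos : 0 < h x := lt_of_le_of_ne (hh0 x) (Ne.symm hne)
  have ht : Tendsto (fun L : ℕ => Φ (h x * L)) atTop atTop :=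
    hΦ.2.2.2.2.comp (tendsto_natCast_atTop_atTop.const_mul_atTop hpos)
  obtain ⟨L, hL⟩ := (ht.eventually_gt_atTop 0).exists
  have := ENNReal.ofReal_eq_zero.1 (hx L)
  exact absurd this (not_le.2 (mul_pos hL hxμ))

lemma lux_pos_ae {Φ μ h : ℝ → ℝ} {a b : ℝ} (hΦ : IsYoung Φ) (hμ : IsWeight μ a b)
    (hh : Measurable h) (hh0 : ∀ x, 0 ≤ h x) :
    ∀ᵐ x ∂(volume.restrict (Set.Icc a b)), h x ≠ 0 → luxNorm Φ μ x b h ≠ 0 := by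
  rw [ae_restrict_iff' measurableSet_Icc]
  have := ae_of_mem_of_ae_of_mem_inter_Ioo (μ := volume)
    (s := {x | x ∈ Icc a b ∧ luxNorm Φ μ x b h = 0}) (p := fun x => h x = 0) ?_
  · filter_upwards [this] with x hx hxI hne h0
    exact hne (hx ⟨hxI, h0⟩)
  · rintro c d ⟨hc, hc0⟩ ⟨hd, hd0⟩ hcd
    have h1 := lux_zero hΦ hμ.1 hμ.2.1 hh hh0
      (ae_restrict_of_ae_restrict_of_subset (Icc_subset_Icc_left hc.1) hμ.2.2) hc0
    rw [ae_restrict_iff' measurableSet_Icc] at h1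
    filter_upwards [h1] with x hx hxI
    exact hx ⟨hxI.2.1.le, hxI.1.1.2⟩

lemma exists_subgrad {L : ℝ → ℝ} (hL : ConvexOn ℝ univ L) (y : ℝ) :
    ∃ m, ∀ s, L y + m * (s - y) ≤ L s := by
  have hi : y ∈ interior (univ : Set ℝ) := by simp
  refine ⟨derivWithin L (Ioi y) y, fun s => ?_⟩
  rcases lt_trichotomy s y with h | rfl | h
  · have h1 := (hL.slope_le_leftDeriv_of_mem_interior (mem_univ s) hi h).trans
      (hL.leftDeriv_le_rightDeriv_of_mem_interior hi)
    rw [slope_def_field, div_le_iff₀ (by linarith)] at h1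
    linarith
  · simp
  · have h1 := hL.rightDeriv_le_slope_of_mem_interior hi (mem_univ s) h
    rw [slope_def_field, le_div_iff₀ (by linarith)] at h1
    linarith

lemma pt_ineq {Φ : ℝ → ℝ} {p : ℝ} (hp : 1 ≤ p) (hΦ0 : ∀ t, 0 ≤ Φ t) {y m : ℝ}
    (hm : ∀ s, Φ (|y| ^ (1 / p)) + m * (s - y) ≤ Φ (|s| ^ (1 / p)))
    (hm0 : 0 ≤ m) (hr : 0 ≤ m * y - Φ (|y| ^ (1 / p)))
    {γ H K : ℝ} {N : ℝ≥0∞} (hγ : 0 ≤ γ) (hH : 0 ≤ H) (hK : 0 < K) (hN0 : N ≠ 0)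
    (hN : γ = 0 ∨ N ≠ ∞) :
    ENNReal.ofReal m * (ENNReal.ofReal (H ^ p / K) * ENNReal.ofReal γ) ≤
      ENNReal.ofReal γ * N ^ p * (2 / ENNReal.ofReal K) *
        ENNReal.ofReal (Φ (H / (2 ^ (1 / p) * N.toReal))) +
      ENNReal.ofReal γ * N ^ p * (2 / ENNReal.ofReal K) *
        ENNReal.ofReal (m * y - Φ (|y| ^ (1 / p))) := by
  rcases hN with rfl | hN
  · simp
  have hp0 : 0 < p := by linarith
  have hn : 0 < N.toReal := ENNReal.toReal_pos hN0 hN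
  obtain ⟨n, hn', rfl⟩ : ∃ n : ℝ, 0 < n ∧ N = ENNReal.ofReal n :=
    ⟨N.toReal, hn, (ENNReal.ofReal_toReal hN).symm⟩
  rw [ENNReal.toReal_ofReal hn'.le, ← mul_add, ← ENNReal.ofReal_add (hΦ0 _) hr,
    ENNReal.ofReal_rpow_of_pos hn']
  have h2 : (2 : ℝ≥0∞) = ENNReal.ofReal 2 := by simp
  have hnp : 0 < n ^ p := Real.rpow_pos_of_pos hn' p
  have hHp : 0 ≤ H ^ p := Real.rpow_nonneg hH p
  rw [h2, ← ENNReal.ofReal_div_of_pos hK, ← ENNReal.ofReal_mul (by positivity),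
    ← ENNReal.ofReal_mul hm0, ← ENNReal.ofReal_mul hγ, ← ENNReal.ofReal_mul (by positivity),
    ← ENNReal.ofReal_mul (by positivity)]
  apply ENNReal.ofReal_le_ofReal
  have hs := hm (H ^ p / (2 * n ^ p))
  have e : |H ^ p / (2 * n ^ p)| ^ (1 / p) = H / (2 ^ (1 / p) * n) := by
    rw [abs_of_nonneg (by positivity), Real.div_rpow hHp (by positivity),
      Real.mul_rpow (by norm_num) hnp.le, ← Real.rpow_mul hH, ← Real.rpow_mul hn'.le,
      mul_one_div_cancel hp0.ne', Real.rpow_one, Real.rpow_one]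
  rw [e] at hs
  calc m * (H ^ p / K * γ) = γ * n ^ p * (2 / K) * (m * (H ^ p / (2 * n ^ p))) := by
        field_simp
    _ ≤ _ := by
        apply mul_le_mul_of_nonneg_left _ (by positivity)
        linarith

lemma main_modular
    (a b : ℝ) (p : ℝ) (hp : 1 ≤ p)
    (Φ μ : ℝ → ℝ) (hΦ : IsYoung Φ) (hμ : IsWeight μ a b)
    (hΛ : ConvexOn ℝ Set.univ (fun t => Φ (|t| ^ (1 / p))))
    (h g : ℝ → ℝ) (hh : Measurable h) (hg : Measurable g)
    (hh0 : ∀ x, 0 ≤ h x) (hg0 : ∀ x, 0 ≤ g x) (K : ℝ) (hK : 0 < K)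
    (hI : 2 * ∫⁻ t in Set.Icc a b, ENNReal.ofReal (g t) * (luxNorm Φ μ t b h) ^ p
      ≤ ENNReal.ofReal K) :
    ∫⁻ x in Set.Icc a b, ENNReal.ofReal
      (Φ ((wInt g a x).toReal ^ (1 / p) * h x / K ^ (1 / p)) * μ x) ≤ 1 := by
  have hp0 : 0 < p := by linarith
  have hΦm : Measurable Φ := (convex_cont hΦ.1).measurable
  have hμm := hμ.1
  have hNm : Measurable (fun t => luxNorm Φ μ t b h) := (lux_antitone Φ μ h b).measurable
  have hNanti := lux_antitone Φ μ h b
  have hpos := lux_pos_ae hΦ hμ hh hh0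
  set N : ℝ → ℝ≥0∞ := fun t => luxNorm Φ μ t b h with hNdef
  change 2 * ∫⁻ t in Set.Icc a b, ENNReal.ofReal (g t) * (N t) ^ p ≤ _ at hI
  set w : ℝ → ℝ≥0∞ := fun t => ENNReal.ofReal (g t) * N t ^ p * (2 / ENNReal.ofReal K) with hw
  set F : ℝ → ℝ → ℝ≥0∞ := fun t x =>
    if t ≤ x then ENNReal.ofReal (Φ (h x / (2 ^ (1 / p) * (N t).toReal))) else 0 with hF
  have hwm : Measurable w := by fun_prop
  have hK0 : ENNReal.ofReal K ≠ 0 := (ENNReal.ofReal_pos.2 hK).ne'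
  have hw1 : ∫⁻ t in Icc a b, w t ≤ 1 := by
    rw [hw, lintegral_mul_const _ (by fun_prop), ← mul_div_assoc, mul_comm]
    exact ENNReal.div_le_of_le_mul (by simpa using hI)
  have hFm : Measurable (Function.uncurry F) := by
    refine Measurable.ite (measurableSet_le measurable_fst measurable_snd) ?_ measurable_const
    fun_prop
  have hNfin : ∀ᵐ t ∂(volume.restrict (Icc a b)), g t = 0 ∨ N t ≠ ∞ := by
    have hlt : ∫⁻ t in Set.Icc a b, ENNReal.ofReal (g t) * (N t) ^ p ≠ ∞ := by
      intro htop
      rw [htop] at hI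
      simp at hI
    filter_upwards [ae_lt_top (by fun_prop) hlt] with t ht
    by_contra! hcon
    have hgt : 0 < g t := lt_of_le_of_ne (hg0 t) (Ne.symm hcon.1)
    rw [hcon.2, ENNReal.top_rpow_of_pos hp0, ENNReal.mul_top (ENNReal.ofReal_pos.2 hgt).ne'] at ht
    exact lt_irrefl _ ht
  -- pointwise Jensen
  have hpt : ∀ᵐ x ∂(volume.restrict (Icc a b)), ENNReal.ofReal
      (Φ ((wInt g a x).toReal ^ (1 / p) * h x / K ^ (1 / p)) * μ x) ≤
      ∫⁻ t in Icc a b, w t * F t x * ENNReal.ofReal (μ x) := by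
    filter_upwards [hpos, ae_restrict_mem measurableSet_Icc] with x hx hxI
    have hFx : Measurable fun t => F t x := hFm.comp (measurable_id.prodMk measurable_const)
    rw [lintegral_mul_const _ (by fun_prop), ENNReal.ofReal_mul (hΦ.2.2.2.1 _)]
    gcongr
    by_cases hhx : h x = 0
    · simp [hhx, hΦ.2.2.1]
    by_cases hG : (wInt g a x).toReal = 0
    · rw [hG, Real.zero_rpow (by positivity)]; simp [hΦ.2.2.1]
    have hNx : N x ≠ 0 := hx hhx
    have hGpos : 0 < (wInt g a x).toReal := lt_of_le_of_ne ENNReal.toReal_nonneg (Ne.symm hG)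
    have hGtop : wInt g a x ≠ ∞ := by rintro h'; simp [h'] at hG
    have hhpos : 0 < h x := lt_of_le_of_ne (hh0 x) (Ne.symm hhx)
    set y : ℝ := (h x) ^ p / K * (wInt g a x).toReal with hy
    have hhp : 0 < h x ^ p := Real.rpow_pos_of_pos hhpos p
    have hypos : 0 < y := by positivity
    have ey : |y| ^ (1 / p) = (wInt g a x).toReal ^ (1 / p) * h x / K ^ (1 / p) := by
      rw [abs_of_pos hypos, hy, Real.mul_rpow (by positivity) hGpos.le,
        Real.div_rpow hhp.le hK.le, ← Real.rpow_mul hhpos.le, mul_one_div_cancel hp0.ne',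
        Real.rpow_one]
      ring
    rw [← ey]
    obtain ⟨m, hm⟩ := exists_subgrad hΛ y
    have hm00 := hm 0
    rw [abs_zero, Real.zero_rpow (by positivity), hΦ.2.2.1] at hm00
    have hr : 0 ≤ m * y - Φ (|y| ^ (1 / p)) := by linarith
    have hm0 : 0 ≤ m := by
      have := hΦ.2.2.2.1 (|y| ^ (1 / p))
      by_contra! hneg
      nlinarith
    have step : ENNReal.ofReal m * (ENNReal.ofReal ((h x) ^ p / K) * wInt g a x) ≤
        (∫⁻ t in Icc a b, w t * F t x) + ENNReal.ofReal (m * y - Φ (|y| ^ (1 / p))) := by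
      calc ENNReal.ofReal m * (ENNReal.ofReal ((h x) ^ p / K) * wInt g a x)
          = ∫⁻ t in Icc a x, ENNReal.ofReal m *
              (ENNReal.ofReal ((h x) ^ p / K) * ENNReal.ofReal (g t)) := by
            rw [lintegral_const_mul _ (by fun_prop), lintegral_const_mul _ (by fun_prop), wInt]
        _ ≤ ∫⁻ t in Icc a x, (w t * F t x +
              w t * ENNReal.ofReal (m * y - Φ (|y| ^ (1 / p)))) := by
            apply lintegral_mono_ae
            filter_upwards [ae_restrict_of_ae_restrict_of_subset
              (Icc_subset_Icc_right hxI.2) hNfin, ae_restrict_mem measurableSet_Icc] with t ht htI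
            have hNt : N t ≠ 0 := by
              have h1 : N x ≤ N t := hNanti htI.2
              intro h'
              rw [h'] at h1
              exact hNx (le_antisymm h1 bot_le)
            simp only [hF, hw, if_pos htI.2]
            exact pt_ineq hp hΦ.2.2.2.1 hm hm0 hr (hg0 t) (hh0 x) hK hNt ht
        _ ≤ ∫⁻ t in Icc a b, (w t * F t x +
              w t * ENNReal.ofReal (m * y - Φ (|y| ^ (1 / p)))) :=
            lintegral_mono_set (Icc_subset_Icc_right hxI.2)
        _ = (∫⁻ t in Icc a b, w t * F t x) +
              (∫⁻ t in Icc a b, w t) * ENNReal.ofReal (m * y - Φ (|y| ^ (1 / p))) := by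
            rw [lintegral_add_left (by fun_prop), lintegral_mul_const _ hwm]
        _ ≤ _ := by
            gcongr
            exact mul_le_of_le_one_left bot_le hw1
    have eL : ENNReal.ofReal m * (ENNReal.ofReal ((h x) ^ p / K) * wInt g a x) =
        ENNReal.ofReal (Φ (|y| ^ (1 / p))) + ENNReal.ofReal (m * y - Φ (|y| ^ (1 / p))) := by
      rw [← ENNReal.ofReal_add (hΦ.2.2.2.1 _) hr]
      conv_lhs => rw [← ENNReal.ofReal_toReal hGtop]
      rw [← ENNReal.ofReal_mul (by positivity), ← ENNReal.ofReal_mul hm0]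
      congr 1
      rw [hy]; ring
    rw [eL] at step
    exact (ENNReal.add_le_add_iff_right ENNReal.ofReal_ne_top).1 step
  refine (lintegral_mono_ae hpt).trans ?_
  rw [lintegral_lintegral_swap]
  · refine le_trans (lintegral_mono_ae ?_) hw1
    filter_upwards [ae_restrict_mem measurableSet_Icc] with t htI
    have hFt : Measurable fun x => F t x := hFm.comp (measurable_const.prodMk measurable_id)
    simp_rw [mul_assoc]
    rw [lintegral_const_mul _ (by fun_prop)]
    by_cases hN0 : N t = 0
    · simp [hw, hN0, ENNReal.zero_rpow_of_pos hp0]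
    refine mul_le_of_le_one_right bot_le ?_
    by_cases hNt : N t = ∞
    · simp [hF, hNt, hΦ.2.2.1]
    have hn : 0 < (N t).toReal := ENNReal.toReal_pos hN0 hNt
    have hlt : N t < ENNReal.ofReal (2 ^ (1 / p) * (N t).toReal) := by
      conv_lhs => rw [← ENNReal.ofReal_toReal hNt]
      have h1 : (1:ℝ) < 2 ^ (1 / p) := Real.one_lt_rpow (by norm_num) (by positivity)
      rw [ENNReal.ofReal_lt_ofReal_iff (by positivity)]
      nlinarith
    refine le_trans ?_ (lux_modular hΦ hμ.2.1 hh0 hlt)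
    have hle : ∀ x, x ∈ Icc a b → F t x * ENNReal.ofReal (μ x) ≤ (Icc t b).indicator
        (fun x => ENNReal.ofReal (Φ (h x / (2 ^ (1 / p) * (N t).toReal)) * μ x)) x := by
      intro x hxI
      by_cases htx : t ≤ x
      · rw [indicator_of_mem (show x ∈ Icc t b from ⟨htx, hxI.2⟩),
          ENNReal.ofReal_mul (hΦ.2.2.2.1 _)]
        simp [hF, htx]
      · simp [hF, htx]
    refine (setLIntegral_mono' measurableSet_Icc hle).trans ?_
    refine (setLIntegral_le_lintegral _ _).trans ?_
    rw [lintegral_indicator measurableSet_Icc]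
  · apply Measurable.aemeasurable
    have : Measurable fun q : ℝ × ℝ => F q.2 q.1 := hFm.comp measurable_swap
    simp only [Function.uncurry_def]
    fun_prop

/-- Key estimate (eqn. (ok_ineq_2)):
`‖(∫ₐ^• g)^{1/p} h‖_{L_μ^Φ[a,b]}^p ≤ 2 ∫ₐ^b g(t) ‖h‖_{L_μ^Φ[t,b]}^p dt`. -/
theorem gauge_norm_integral_estimate
    (a b : ℝ) (hab : a < b) (p : ℝ) (hp : 1 ≤ p)
    (Φ μ : ℝ → ℝ) (hΦ : IsYoung Φ) (hμ : IsWeight μ a b)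
    (hΛ : ConvexOn ℝ Set.univ (fun t => Φ (|t| ^ (1 / p))))
    (h g : ℝ → ℝ) (hh : Measurable h) (hg : Measurable g)
    (hh0 : ∀ x, 0 ≤ h x) (hg0 : ∀ x, 0 ≤ g x) :
    (luxNorm Φ μ a b (fun x => (wInt g a x).toReal ^ (1 / p) * h x)) ^ p
      ≤ 2 * ∫⁻ t in Set.Icc a b, ENNReal.ofReal (g t) * (luxNorm Φ μ t b h) ^ p := by
  have hp0 : 0 < p := by linarith
  refine le_of_forall_gt fun c hc => ?_
  obtain ⟨K', hK1, hK2⟩ := exists_between hc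
  have hK'top : K' ≠ ∞ := (hK2.trans_le le_top).ne
  have hK : 0 < K'.toReal := ENNReal.toReal_pos (bot_le.trans_lt hK1).ne' hK'top
  have hKe : ENNReal.ofReal K'.toReal = K' := ENNReal.ofReal_toReal hK'top
  have hmod := main_modular a b p hp Φ μ hΦ hμ hΛ h g hh hg hh0 hg0 K'.toReal hK
    (by rw [hKe]; exact hK1.le)
  have hle : luxNorm Φ μ a b (fun x => (wInt g a x).toReal ^ (1 / p) * h x) ≤
      ENNReal.ofReal (K'.toReal ^ (1 / p)) :=
    sInf_le ⟨_, Real.rpow_pos_of_pos hK _, rfl, hmod⟩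
  refine lt_of_le_of_lt ((ENNReal.rpow_le_rpow hle hp0.le).trans_eq ?_) hK2
  rw [ENNReal.ofReal_rpow_of_pos (Real.rpow_pos_of_pos hK _), ← Real.rpow_mul hK.le,
    one_div_mul_cancel hp0.ne', Real.rpow_one, hKe]
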